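/- Let Π be a connected resolution refutation of a CNF τ (its resolution DAG has a unique sink, labeled by the empty clause) and S a proper subset of var(Π). Applying the variable-deletion algorithm to Π: a node v is deleted if and only if every axiom node below v (in the downward closure of v) is labeled by a clause all of whose variables lie in S. In particular, the root (sink) is never deleted. -/

import Mathlib

abbrev Var := ℕ
abbrev Lit := Var × Bool
abbrev Clause := Finset Lit

def Clause.vars (C : Clause) : Finset Var := C.image Prod.fst

abbrev Assignment := Var → Option Bool

def litSat (σ : Assignment) (l : Lit) : Prop := σ l.1 = some l.2
def litFalse (σ : Assignment) (l : Lit) : Prop := σ l.1 = some (!l.2)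

def Clause.falsified (σ : Assignment) (C : Clause) : Prop := ∀ l ∈ C, litFalse σ l

def resolve (x : Var) (C D : Clause) : Clause :=
  C.filter (fun l => l.1 ≠ x) ∪ D.filter (fun l => l.1 ≠ x)

def resolvableOn (x : Var) (C D : Clause) : Prop :=
  (∃ a : Bool, (x, a) ∈ C ∧ (x, !a) ∈ D) ∧
    ∀ (y : Var) (b : Bool), y ≠ x → (y, b) ∈ C → (y, !b) ∉ D
structure ResDag (V : Type) where
  clause : V → Clause
  prem : V → Option (V × V × Var)
  res_ok : ∀ (v : V) (p : V × V × Var), prem v = some p →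
    (∃ a : Bool, (p.2.2, a) ∈ clause p.1 ∧ (p.2.2, !a) ∈ clause p.2.1) ∧
      clause v = resolve p.2.2 (clause p.1) (clause p.2.1)
  wf : WellFounded (fun u v : V =>
    ∃ p : V × V × Var, prem v = some p ∧ (u = p.1 ∨ u = p.2.1))

def ResDag.parent {V : Type} (G : ResDag V) (u v : V) : Prop :=
  ∃ p : V × V × Var, G.prem v = some p ∧ (u = p.1 ∨ u = p.2.1)

def ResDag.reach {V : Type} (G : ResDag V) : V → V → Prop :=
  Relation.ReflTransGen (ResDag.parent G)

def delS (S : Finset Var) (C : Clause) : Clause := C.filter (fun l => l.1 ∉ S)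
structure DelRun {V : Type} (G : ResDag V) (S : Finset Var) where
  deleted : V → Prop
  c' : V → Clause
  ax_del : ∀ v : V, G.prem v = none → (deleted v ↔ delS S (G.clause v) = ∅)
  ax_keep : ∀ v : V, G.prem v = none → ¬ deleted v → c' v = delS S (G.clause v)
  res_del : ∀ (v : V) (p : V × V × Var), G.prem v = some p →
    deleted p.1 → deleted p.2.1 → deleted v
  res_surv : ∀ (v : V) (p : V × V × Var), G.prem v = some p →
    (¬ deleted p.1 ∨ ¬ deleted p.2.1) → ¬ deleted v
  res_resolve : ∀ (v : V) (p : V × V × Var), G.prem v = some p →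
    ¬ deleted p.1 → ¬ deleted p.2.1 → resolvableOn p.2.2 (c' p.1) (c' p.2.1) →
    c' v = resolve p.2.2 (c' p.1) (c' p.2.1)
  res_weak : ∀ (v : V) (p : V × V × Var), G.prem v = some p →
    (¬ deleted p.1 ∨ ¬ deleted p.2.1) →
    ¬ (¬ deleted p.1 ∧ ¬ deleted p.2.1 ∧ resolvableOn p.2.2 (c' p.1) (c' p.2.1)) →
    ∃ u : V, (u = p.1 ∨ u = p.2.1) ∧ ¬ deleted u ∧
      c' u ⊆ delS S (G.clause v) ∧ c' v = c' u

/-!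
An inner node is deleted exactly when both of its premises are, so deletion spreads down to all
nodes below a deleted node and, by well-founded induction, up from the axioms, which are deleted
exactly when their variables lie in `S`. Resolution introduces no variables, so all variables of a
deleted node lie in `S`. If the sink were deleted, so would be every node below it, and every
variable would lie in `S`.
-/

theorem Clause.vars_resolve_subset (x : Var) (C D : Clause) :
    Clause.vars (resolve x C D) ⊆ Clause.vars C ∪ Clause.vars D := by
  simp only [Clause.vars, resolve, Finset.image_union]
  gcongr <;> exact Finset.filter_subset _ _

theorem delS_eq_empty_iff (S : Finset Var) (C : Clause) :
    delS S C = ∅ ↔ Clause.vars C ⊆ S := by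
  simp only [delS, Clause.vars, Finset.filter_eq_empty_iff, not_not, Finset.image_subset_iff]

namespace ResDag

variable {V : Type} {G : ResDag V} {v : V} {p : V × V × Var}

theorem parent_left (hp : G.prem v = some p) : G.parent p.1 v :=
  ⟨p, hp, Or.inl rfl⟩

theorem parent_right (hp : G.prem v = some p) : G.parent p.2.1 v :=
  ⟨p, hp, Or.inr rfl⟩

theorem of_axioms_below {P : V → Prop}
    (resolution : ∀ w p, G.prem w = some p → P p.1 → P p.2.1 → P w)
    (axioms : ∀ u, G.prem u = none → G.reach u v → P u) : P v := by
  induction v using G.wf.induction with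
  | _ v ih =>
    have of_parent {u : V} (huv : G.parent u v) : P u :=
      ih u huv fun w hw hwu => axioms w hw (hwu.tail huv)
    cases hp : G.prem v with
    | none => exact axioms v hp .refl
    | some p => exact resolution v p hp (of_parent (parent_left hp)) (of_parent (parent_right hp))

theorem vars_clause_subset_of_axioms_below {T : Finset Var}
    (h : ∀ u, G.prem u = none → G.reach u v → Clause.vars (G.clause u) ⊆ T) :
    Clause.vars (G.clause v) ⊆ T := by
  refine of_axioms_below (P := fun w => Clause.vars (G.clause w) ⊆ T) (fun w p hp h₁ h₂ => ?_) h
  rw [(G.res_ok w p hp).2]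
  exact (Clause.vars_resolve_subset _ _ _).trans (Finset.union_subset h₁ h₂)

end ResDag

namespace DelRun

variable {V : Type} {G : ResDag V} {S : Finset Var} {u v : V}

theorem deleted_of_parent (R : DelRun G S) (huv : G.parent u v) (hv : R.deleted v) :
    R.deleted u := by
  obtain ⟨p, hp, rfl | rfl⟩ := huv <;> by_contra hu
  · exact R.res_surv v p hp (Or.inl hu) hv
  · exact R.res_surv v p hp (Or.inr hu) hv

theorem deleted_of_reach (R : DelRun G S) (huv : G.reach u v) (hv : R.deleted v) :
    R.deleted u := by
  induction huv with
  | refl => exact hv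
  | tail _ hparent ih => exact ih (R.deleted_of_parent hparent hv)

theorem deleted_iff_of_prem_eq_none (R : DelRun G S) (hv : G.prem v = none) :
    R.deleted v ↔ Clause.vars (G.clause v) ⊆ S :=
  (R.ax_del v hv).trans (delS_eq_empty_iff S (G.clause v))

theorem deleted_iff_axioms_below (R : DelRun G S) (v : V) :
    R.deleted v ↔ ∀ u, G.prem u = none → G.reach u v → Clause.vars (G.clause u) ⊆ S := by
  constructor
  · intro hv u hu huv
    exact (R.deleted_iff_of_prem_eq_none hu).1 (R.deleted_of_reach huv hv)
  · intro h
    exact ResDag.of_axioms_below R.res_del fun u hu huv =>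
      (R.deleted_iff_of_prem_eq_none hu).2 (h u hu huv)

theorem vars_clause_subset_of_deleted (R : DelRun G S) (hv : R.deleted v) :
    Clause.vars (G.clause v) ⊆ S :=
  ResDag.vars_clause_subset_of_axioms_below ((R.deleted_iff_axioms_below v).1 hv)

end DelRun

theorem stmt_5_general {V : Type} (G : ResDag V) (root : V) (S : Finset Var)
    (hproper : ∃ y : Var, (∃ v : V, G.reach v root ∧ y ∈ Clause.vars (G.clause v)) ∧ y ∉ S)
    (R : DelRun G S) :
    (∀ v : V, R.deleted v ↔
      ∀ u : V, G.prem u = none → G.reach u v → Clause.vars (G.clause u) ⊆ S) ∧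
    ¬ R.deleted root := by
  refine ⟨R.deleted_iff_axioms_below, fun hroot => ?_⟩
  obtain ⟨y, ⟨v, hv, hy⟩, hyS⟩ := hproper
  exact hyS (R.vars_clause_subset_of_deleted (R.deleted_of_reach hv hroot) hy)

theorem stmt_5 {V : Type} [Fintype V] (G : ResDag V) (root : V)
    (hroot : G.clause root = ∅) (hconn : ∀ v : V, ResDag.reach G v root)
    (S : Finset Var)
    (hSsub : ∀ x ∈ S, ∃ v : V, x ∈ Clause.vars (G.clause v))
    (hproper : ∃ y : Var, (∃ v : V, y ∈ Clause.vars (G.clause v)) ∧ y ∉ S)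
    (R : DelRun G S) :
    (∀ v : V, R.deleted v ↔
      ∀ u : V, G.prem u = none → ResDag.reach G u v → Clause.vars (G.clause u) ⊆ S) ∧
    ¬ R.deleted root := by
  obtain ⟨y, ⟨v, hy⟩, hyS⟩ := hproper
  exact stmt_5_general G root S ⟨y, ⟨v, hconn v, hy⟩, hyS⟩ R
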